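/- Let p, ν ∈ ℕ with ν ≥ p. A twice-differentiable solution a : (−1,1) → ℝ of the master ODE (1−τ²)·a″(τ) + 2(p−1)·τ·a′(τ) + (ν(ν+1) − p(p−1))·a(τ) = 0 extends to a C^∞ function on an open interval containing [−1,1] if and only if there exists C ∈ ℝ such that a(τ) = C·(1−τ²)^{p}·P_ν^{(p)}(τ) for all τ ∈ (−1,1). -/

import Mathlib

/-- The Legendre polynomial `P_ν` via the Rodrigues formula. -/
noncomputable def legendreP (ν : ℕ) (τ : ℝ) : ℝ :=
  ((-1 : ℝ) ^ ν / (2 ^ ν * Nat.factorial ν)) *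
    iteratedDeriv ν (fun t : ℝ => (1 - t ^ 2) ^ ν) τ

/-!
Write `L_q f = (1 - τ²) f'' + 2 (q - 1) τ f' + (l - q (q - 1)) f`. Differentiation intertwines `L_q`
with `L_{q-1}`, so for `l = ν (ν + 1)` the derivative of order `p + ν` turns a solution `a` of
`L_p a = 0` into a solution `w` of `L_{-ν} w = 0`. The latter equation says that
`(1 - τ²) ^ (ν + 1) w'` is constant; if `w'` has a limit at `τ = 1`, this constant is `0` and `w`
is constant. On solutions the passage `a ↦ w` is injective: going from `L_q` to `L_{q-1}`, a
solution with zero derivative is killed by the factor `ν (ν + 1) - q (q - 1)`, which is nonzero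
for `-ν < q ≤ ν`. Hence the solutions regular at `τ = 1` form a space of dimension at most one.

To exhibit a nonzero element, multiplication by `(1 - τ²) ^ p` carries solutions of `L_{-p} = 0` to
solutions of `L_p = 0`. Applied to the constant `1` it shows that `(1 - τ²) ^ ν` solves
`L_ν = 0`; its `ν`-th derivative, the Legendre polynomial up to scaling, then solves `L_0 = 0`, the
`p`-th derivative of that solves `L_{-p} = 0`, and `(1 - τ²) ^ p P_ν^{(p)}` solves `L_p = 0`.
-/

open Filter Set
open scoped ContDiff Topology

lemma contDiffAt_iteratedDeriv {𝕜 F : Type*} [NontriviallyNormedField 𝕜] [NormedAddCommGroup F]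
    [NormedSpace 𝕜 F] {f : 𝕜 → F} {x : 𝕜} {m N : WithTop ℕ∞} {n : ℕ} (hf : ContDiffAt 𝕜 N f x)
    (hmN : m + n ≤ N) : ContDiffAt 𝕜 m (iteratedDeriv n f) x := by
  induction n generalizing m with
  | zero => simpa using hf.of_le (le_self_add.trans hmN)
  | succ n ih =>
    rw [iteratedDeriv_succ]
    refine (ih (m := m + 1) ?_).derivWithin le_rfl
    rwa [add_assoc, add_comm 1, ← Nat.cast_succ]

/-- The operator `f ↦ (1 - τ²) f'' + 2 (q - 1) τ f' + (l - q (q - 1)) f`, whose kernel for `q = p`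
and `l = λ` is the solution space of the master ODE; `q` is real because differentiating a
solution lowers it by `1`, eventually below zero. -/
noncomputable def masterOp (l q : ℝ) (f : ℝ → ℝ) (τ : ℝ) : ℝ :=
  (1 - τ ^ 2) * deriv (deriv f) τ + 2 * (q - 1) * τ * deriv f τ + (l - q * (q - 1)) * f τ

section MasterOp

variable {l q τ : ℝ} {f g : ℝ → ℝ} {s : Set ℝ}

lemma hasDerivAt_one_sub_sq (τ : ℝ) : HasDerivAt (fun t : ℝ => 1 - t ^ 2) (-(2 * τ)) τ := by
  simpa using (hasDerivAt_pow 2 τ).const_sub 1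

lemma eqOn_masterOp_of_eqOn (hs : IsOpen s) (hfg : EqOn f g s) :
    EqOn (masterOp l q f) (masterOp l q g) s := fun τ hτ => by
  simp only [masterOp, (hfg.deriv hs).deriv hs hτ, hfg.deriv hs hτ, hfg hτ]

lemma masterOp_sub (hf : ContDiffAt ℝ 2 f τ) (hg : ContDiffAt ℝ 2 g τ) :
    masterOp l q (f - g) τ = masterOp l q f τ - masterOp l q g τ := by
  have h₁ := iteratedDeriv_sub (n := 1) (hf.of_le (by norm_num)) (hg.of_le (by norm_num))
  have h₂ := iteratedDeriv_sub (n := 2) hf hg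
  simp only [iteratedDeriv_succ, iteratedDeriv_zero] at h₁ h₂
  simp only [masterOp, h₁, h₂, Pi.sub_apply]
  ring

lemma masterOp_const_mul (c : ℝ) (f : ℝ → ℝ) (τ : ℝ) :
    masterOp l q (fun t => c * f t) τ = c * masterOp l q f τ := by
  simp only [masterOp, deriv_const_mul_field']
  ring

-- With `l = q (q - 1)` the zeroth-order term of `masterOp` vanishes, so the last summand only
-- involves derivatives of `f`.
lemma masterOp_mul (hf : ContDiffAt ℝ 2 f τ) (hg : ContDiffAt ℝ 2 g τ) :
    masterOp l q (fun t => f t * g t) τ = f τ * masterOp l q g τ +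
      2 * (1 - τ ^ 2) * deriv f τ * deriv g τ + g τ * masterOp (q * (q - 1)) q f τ := by
  have hfirst : deriv (fun t => f t * g t) =ᶠ[𝓝 τ] fun t => deriv f t * g t + f t * deriv g t := by
    filter_upwards [hf.eventually (by simp), hg.eventually (by simp)] with t hft hgt
    exact deriv_fun_mul (hft.differentiableAt two_ne_zero) (hgt.differentiableAt two_ne_zero)
  have hf₀ := (hf.differentiableAt two_ne_zero).hasDerivAt
  have hg₀ := (hg.differentiableAt two_ne_zero).hasDerivAt
  have hf₁ := ((hf.derivWithin (m := 1) one_add_one_eq_two.le).differentiableAt_one).hasDerivAt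
  have hg₁ := ((hg.derivWithin (m := 1) one_add_one_eq_two.le).differentiableAt_one).hasDerivAt
  have hsecond := hfirst.deriv_eq.trans ((hf₁.mul hg₀).add (hf₀.mul hg₁)).deriv
  simp only [masterOp, hsecond, hfirst.self_of_nhds]
  ring

lemma deriv_masterOp (hf : ContDiffAt ℝ 3 f τ) :
    deriv (masterOp l q f) τ = masterOp l (q - 1) (deriv f) τ := by
  have hf' : ContDiffAt ℝ 2 (deriv f) τ := hf.derivWithin (by norm_num)
  have hf'' : ContDiffAt ℝ 1 (deriv (deriv f)) τ := hf'.derivWithin (by norm_num)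
  have h₀ := (hf.differentiableAt three_ne_zero).hasDerivAt
  have h₁ := (hf'.differentiableAt two_ne_zero).hasDerivAt
  have h₂ := hf''.differentiableAt_one.hasDerivAt
  have h := (((hasDerivAt_one_sub_sq τ).mul h₂).add
    ((hasDerivAt_const_mul (x := τ) (2 * (q - 1))).mul h₁)).add (h₀.const_mul (l - q * (q - 1)))
  refine h.deriv.trans ?_
  simp only [masterOp]
  ring

lemma iteratedDeriv_masterOp {n : ℕ} (hf : ContDiffAt ℝ (n + 2) f τ) :
    iteratedDeriv n (masterOp l q f) τ = masterOp l (q - n) (iteratedDeriv n f) τ := by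
  induction n generalizing τ with
  | zero => simp
  | succ n ih =>
    have hcomm : iteratedDeriv n (masterOp l q f) =ᶠ[𝓝 τ]
        masterOp l (q - n) (iteratedDeriv n f) := by
      filter_upwards [hf.eventually (mod_cast ENat.natCast_ne_coe_top (n + 1 + 2))] with t ht
      exact ih (ht.of_le (by gcongr; simp))
    have hf₃ : ContDiffAt ℝ 3 (iteratedDeriv n f) τ :=
      contDiffAt_iteratedDeriv hf (by norm_cast; omega)
    rw [iteratedDeriv_succ, hcomm.deriv_eq, deriv_masterOp hf₃, iteratedDeriv_succ, Nat.cast_succ,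
      sub_sub]

lemma eqOn_masterOp_iteratedDeriv_zero {n : ℕ} (hs : IsOpen s)
    (hf : ∀ τ ∈ s, ContDiffAt ℝ (n + 2) f τ) (hsol : EqOn (masterOp l q f) 0 s) :
    EqOn (masterOp l (q - n) (iteratedDeriv n f)) 0 s := fun τ hτ => by
  rw [← iteratedDeriv_masterOp (hf τ hτ), hsol.iteratedDeriv_of_isOpen hs n hτ]
  simp

lemma eqOn_zero_of_eqOn_iteratedDeriv_zero {n : ℕ} (hs : IsOpen s)
    (hl : ∀ k < n, l ≠ (q - k) * (q - k - 1)) (hf : ∀ τ ∈ s, ContDiffAt ℝ (n + 1) f τ)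
    (hsol : EqOn (masterOp l q f) 0 s) (hn : EqOn (iteratedDeriv n f) 0 s) : EqOn f 0 s := by
  induction n with
  | zero => simpa using hn
  | succ n ih =>
    refine ih (fun k hk => hl k (hk.trans n.lt_succ_self))
      (fun τ hτ => (hf τ hτ).of_le (by gcongr; simp)) fun τ hτ => ?_
    have hsol_n := eqOn_masterOp_iteratedDeriv_zero (n := n) hs
      (fun t ht => (hf t ht).of_le (by norm_cast)) hsol hτ
    rw [iteratedDeriv_succ] at hn
    have hkill : (l - (q - n) * (q - n - 1)) * iteratedDeriv n f τ = 0 := by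
      simpa [masterOp, hn hτ, hn.deriv hs hτ] using hsol_n
    exact (mul_eq_zero.1 hkill).resolve_left (sub_ne_zero.2 (hl n n.lt_succ_self))

lemma eqOn_zero_of_eqOn_iteratedDeriv_zero_of_le {n : ℕ} {ν : ℝ} (hs : IsOpen s) (hqν : q ≤ ν)
    (hn : n ≤ q + ν) (hf : ∀ τ ∈ s, ContDiffAt ℝ (n + 1) f τ)
    (hsol : EqOn (masterOp (ν * (ν + 1)) q f) 0 s) (hfn : EqOn (iteratedDeriv n f) 0 s) :
    EqOn f 0 s := by
  refine eqOn_zero_of_eqOn_iteratedDeriv_zero hs (fun k hk h_eq => ?_) hf hsol hfn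
  have hk_succ : (k : ℝ) + 1 ≤ n := by exact_mod_cast hk
  have hfactors : 0 < (ν + (q - k)) * (ν + 1 - (q - k)) :=
    mul_pos (by linarith) (by linarith [k.cast_nonneg (α := ℝ)])
  linarith

end MasterOp

section RegularSolutions

variable {k n : ℕ} {f b w : ℝ → ℝ} {τ : ℝ}

lemma hasDerivAt_one_sub_sq_pow_mul_deriv (k : ℕ) (hw : DifferentiableAt ℝ (deriv w) τ) :
    HasDerivAt (fun t => (1 - t ^ 2) ^ (k + 1) * deriv w t)
      ((1 - τ ^ 2) ^ k * masterOp (k * (k + 1)) (-k) w τ) τ := by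
  refine (((hasDerivAt_one_sub_sq τ).fun_pow (k + 1)).mul hw.hasDerivAt).congr_deriv ?_
  simp only [masterOp]
  push_cast
  ring

lemma eqOn_deriv_zero_of_masterOp_eq_zero
    (hw : ∀ τ ∈ Ioo (-1 : ℝ) 1, DifferentiableAt ℝ (deriv w) τ)
    (hw₁ : ContinuousAt (deriv w) 1)
    (hsol : EqOn (masterOp (k * (k + 1)) (-k) w) 0 (Ioo (-1) 1)) :
    EqOn (deriv w) 0 (Ioo (-1) 1) := by
  set W : ℝ → ℝ := fun t => (1 - t ^ 2) ^ (k + 1) * deriv w t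
  have hW : ∀ t ∈ Ioo (-1 : ℝ) 1, HasDerivAt W 0 t := fun t ht => by
    simpa [hsol ht] using hasDerivAt_one_sub_sq_pow_mul_deriv k (hw t ht)
  obtain ⟨c, hc⟩ := isOpen_Ioo.exists_is_const_of_deriv_eq_zero isPreconnected_Ioo
    (fun t ht => (hW t ht).differentiableAt.differentiableWithinAt) fun t ht => (hW t ht).deriv
  have hW_lim : Tendsto W (𝓝[<] 1) (𝓝 0) := by
    have hcont : ContinuousAt W 1 := by fun_prop
    simpa [W] using hcont.tendsto.mono_left nhdsWithin_le_nhds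
  have hW_const : W =ᶠ[𝓝[<] 1] fun _ => c := by
    filter_upwards [Ioo_mem_nhdsLT (show (-1 : ℝ) < 1 by norm_num)] with t ht using hc t ht
  have hc₀ : c = 0 := tendsto_nhds_unique (tendsto_const_nhds.congr' hW_const.symm) hW_lim
  intro τ hτ
  have hτ_pos : 0 < 1 - τ ^ 2 := by nlinarith [hτ.1, hτ.2]
  exact (mul_eq_zero.1 ((hc τ hτ).trans hc₀)).resolve_left (pow_ne_zero _ hτ_pos.ne')

lemma exists_eqOn_iteratedDeriv_const (hf : ∀ τ ∈ Ioc (-1 : ℝ) 1, ContDiffAt ℝ (n + 2) f τ)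
    (hsol : EqOn (masterOp (k * (k + 1)) (n - k) f) 0 (Ioo (-1) 1)) :
    ∃ c, EqOn (iteratedDeriv n f) (fun _ => c) (Ioo (-1) 1) := by
  have hw : ∀ τ ∈ Ioc (-1 : ℝ) 1, ContDiffAt ℝ 2 (iteratedDeriv n f) τ := fun τ hτ =>
    contDiffAt_iteratedDeriv (hf τ hτ) (add_comm _ _).le
  have hw' : ∀ τ ∈ Ioc (-1 : ℝ) 1, ContDiffAt ℝ 1 (deriv (iteratedDeriv n f)) τ := fun τ hτ =>
    (hw τ hτ).derivWithin one_add_one_eq_two.le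
  have hw_sol := eqOn_masterOp_iteratedDeriv_zero isOpen_Ioo
    (fun τ hτ => hf τ (Ioo_subset_Ioc_self hτ)) hsol
  rw [sub_sub_cancel_left] at hw_sol
  exact isOpen_Ioo.exists_is_const_of_deriv_eq_zero isPreconnected_Ioo
    (fun τ hτ =>
      ((hw τ (Ioo_subset_Ioc_self hτ)).differentiableAt two_ne_zero).differentiableWithinAt)
    (eqOn_deriv_zero_of_masterOp_eq_zero
      (fun τ hτ => (hw' τ (Ioo_subset_Ioc_self hτ)).differentiableAt_one)
      (hw' 1 (by norm_num)).continuousAt hw_sol)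

theorem exists_eqOn_const_mul_of_masterOp_eq_zero (hn : n ≤ 2 * k)
    (hf : ∀ τ ∈ Ioc (-1 : ℝ) 1, ContDiffAt ℝ (n + 2) f τ)
    (hb : ∀ τ ∈ Ioc (-1 : ℝ) 1, ContDiffAt ℝ (n + 2) b τ)
    (hf_sol : EqOn (masterOp (k * (k + 1)) (n - k) f) 0 (Ioo (-1) 1))
    (hb_sol : EqOn (masterOp (k * (k + 1)) (n - k) b) 0 (Ioo (-1) 1))
    (hb_ne : ¬ EqOn b 0 (Ioo (-1) 1)) :
    ∃ C, EqOn f (fun τ => C * b τ) (Ioo (-1) 1) := by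
  have hn_real : (n : ℝ) ≤ 2 * k := by exact_mod_cast hn
  have hinj {g : ℝ → ℝ} (hg : ∀ τ ∈ Ioo (-1 : ℝ) 1, ContDiffAt ℝ (n + 2) g τ) :=
    eqOn_zero_of_eqOn_iteratedDeriv_zero_of_le (n := n) (q := n - k) (ν := k) isOpen_Ioo
      (by linarith) (by linarith) fun τ hτ => (hg τ hτ).of_le (by norm_cast; omega)
  have hf_reg := fun τ hτ => hf τ (Ioo_subset_Ioc_self hτ)
  have hb_reg := fun τ hτ => hb τ (Ioo_subset_Ioc_self hτ)
  obtain ⟨A, hA⟩ := exists_eqOn_iteratedDeriv_const hf hf_sol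
  obtain ⟨B, hB⟩ := exists_eqOn_iteratedDeriv_const hb hb_sol
  have hB₀ : B ≠ 0 := by
    rintro rfl
    exact hb_ne (hinj hb_reg hb_sol hB)
  have hCb : ∀ τ ∈ Ioo (-1 : ℝ) 1, ContDiffAt ℝ (n + 2) (fun t => A / B * b t) τ := fun τ hτ =>
    contDiffAt_const.mul (hb_reg τ hτ)
  have hdiff : EqOn (f - fun t => A / B * b t) 0 (Ioo (-1) 1) := by
    refine hinj (fun τ hτ => (hf_reg τ hτ).sub (hCb τ hτ)) (fun τ hτ => ?_) fun τ hτ => ?_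
    · rw [masterOp_sub ((hf_reg τ hτ).of_le le_add_self) ((hCb τ hτ).of_le le_add_self),
        masterOp_const_mul, hf_sol hτ, hb_sol hτ]
      simp
    · rw [iteratedDeriv_sub ((hf_reg τ hτ).of_le le_self_add) ((hCb τ hτ).of_le le_self_add),
        iteratedDeriv_const_mul_field, hA hτ, hB hτ, div_mul_cancel₀ _ hB₀]
      simp
  exact ⟨A / B, fun τ hτ => sub_eq_zero.1 (hdiff hτ)⟩

end RegularSolutions

section Legendre

variable {p ν : ℕ} {τ : ℝ}

lemma contDiff_one_sub_sq_pow (p : ℕ) {N : WithTop ℕ∞} :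
    ContDiff ℝ N fun t : ℝ => (1 - t ^ 2) ^ p := by
  fun_prop

-- The factor `1 - τ²` on the left avoids the exponent `p - 1`, which is truncated at `p = 0`.
lemma one_sub_sq_mul_deriv_one_sub_sq_pow (p : ℕ) (τ : ℝ) :
    (1 - τ ^ 2) * deriv (fun t : ℝ => (1 - t ^ 2) ^ p) τ = -(2 * p * τ * (1 - τ ^ 2) ^ p) := by
  rw [((hasDerivAt_one_sub_sq τ).fun_pow p).deriv]
  cases p with
  | zero => simp
  | succ p => simp only [Nat.add_sub_cancel]; ring

lemma masterOp_one_sub_sq_pow (l : ℝ) (p : ℕ) (τ : ℝ) :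
    masterOp l p (fun t => (1 - t ^ 2) ^ p) τ = (l - p * (p + 1)) * (1 - τ ^ 2) ^ p := by
  have hfirst := one_sub_sq_mul_deriv_one_sub_sq_pow p
  have hF : ContDiff ℝ 2 fun t : ℝ => (1 - t ^ 2) ^ p := contDiff_one_sub_sq_pow p
  have h₀ := (hF.differentiable two_ne_zero τ).hasDerivAt
  have h₁ := (hF.differentiable_deriv_two τ).hasDerivAt
  have hsecond := ((hasDerivAt_one_sub_sq τ).mul h₁).unique
    (((hasDerivAt_const_mul (2 * (p : ℝ))).mul h₀).neg.congr_of_eventuallyEq (.of_forall hfirst))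
  simp only [masterOp]
  linear_combination hsecond

lemma masterOp_one_sub_sq_pow_mul (l : ℝ) (p : ℕ) {u : ℝ → ℝ} (hu : ContDiffAt ℝ 2 u τ) :
    masterOp l p (fun t => (1 - t ^ 2) ^ p * u t) τ = (1 - τ ^ 2) ^ p * masterOp l (-p) u τ := by
  rw [masterOp_mul (contDiff_one_sub_sq_pow p).contDiffAt hu, masterOp_one_sub_sq_pow]
  simp only [masterOp]
  linear_combination 2 * deriv u τ * one_sub_sq_mul_deriv_one_sub_sq_pow p τ

lemma contDiffAt_legendreP (ν : ℕ) {N : WithTop ℕ∞} : ContDiffAt ℝ N (legendreP ν) τ :=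
  contDiffAt_const.mul
    (contDiffAt_iteratedDeriv (N := ω) (contDiff_one_sub_sq_pow ν).contDiffAt le_top)

lemma masterOp_legendreP (ν : ℕ) (τ : ℝ) : masterOp (ν * (ν + 1)) 0 (legendreP ν) τ = 0 := by
  have hF : EqOn (masterOp (ν * (ν + 1)) ν fun t => (1 - t ^ 2) ^ ν) 0 univ := fun t _ => by
    simp [masterOp_one_sub_sq_pow]
  have hD := eqOn_masterOp_iteratedDeriv_zero (n := ν) isOpen_univ
    (fun t _ => (contDiff_one_sub_sq_pow ν).contDiffAt) hF (mem_univ τ)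
  rw [sub_self] at hD
  exact (masterOp_const_mul _ _ τ).trans (by rw [hD]; simp)

lemma not_eqOn_iteratedDeriv_legendreP_zero (hpν : p ≤ ν) :
    ¬ EqOn (iteratedDeriv p (legendreP ν)) 0 (Ioo (-1) 1) := by
  intro hzero
  have hP : EqOn (legendreP ν) 0 (Ioo (-1) 1) :=
    eqOn_zero_of_eqOn_iteratedDeriv_zero_of_le isOpen_Ioo ν.cast_nonneg (by simpa using hpν)
      (fun τ _ => contDiffAt_legendreP ν) (fun τ _ => masterOp_legendreP ν τ) hzero
  have hF : EqOn (fun t : ℝ => (1 - t ^ 2) ^ ν) 0 (Ioo (-1) 1) :=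
    eqOn_zero_of_eqOn_iteratedDeriv_zero_of_le (q := ν) (n := ν) isOpen_Ioo le_rfl (by simp)
      (fun τ _ => (contDiff_one_sub_sq_pow ν).contDiffAt)
      (fun τ _ => by simp [masterOp_one_sub_sq_pow])
      fun τ hτ => (mul_eq_zero.1 (hP hτ)).resolve_left (by positivity)
  simpa using hF (show (0 : ℝ) ∈ Ioo (-1 : ℝ) 1 by norm_num)

/-- The function `(1 - τ²) ^ p P_ν^{(p)}`, which for `p ≤ ν` spans the solutions of the master ODE
that are regular at `τ = 1`. -/
noncomputable def legendreMode (p ν : ℕ) (τ : ℝ) : ℝ :=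
  (1 - τ ^ 2) ^ p * iteratedDeriv p (legendreP ν) τ

lemma contDiffAt_legendreMode (p ν : ℕ) {N : WithTop ℕ∞} : ContDiffAt ℝ N (legendreMode p ν) τ :=
  (contDiff_one_sub_sq_pow p).contDiffAt.mul
    (contDiffAt_iteratedDeriv (contDiffAt_legendreP ν (N := ω)) le_top)

lemma masterOp_legendreMode (p ν : ℕ) (τ : ℝ) :
    masterOp (ν * (ν + 1)) p (legendreMode p ν) τ = 0 := by
  have hD := eqOn_masterOp_iteratedDeriv_zero (n := p) isOpen_univ
    (fun t _ => contDiffAt_legendreP ν) (fun t _ => masterOp_legendreP ν t) (mem_univ τ)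
  rw [zero_sub] at hD
  refine (masterOp_one_sub_sq_pow_mul _ p
    (contDiffAt_iteratedDeriv (contDiffAt_legendreP ν (N := ω)) le_top)).trans ?_
  rw [hD]
  simp

lemma not_eqOn_legendreMode_zero (hpν : p ≤ ν) : ¬ EqOn (legendreMode p ν) 0 (Ioo (-1) 1) := by
  refine fun hzero => not_eqOn_iteratedDeriv_legendreP_zero hpν fun τ hτ => ?_
  have hτ_pos : 0 < 1 - τ ^ 2 := by nlinarith [hτ.1, hτ.2]
  exact (mul_eq_zero.1 (hzero hτ)).resolve_left (pow_ne_zero _ hτ_pos.ne')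

end Legendre

theorem stmt_5_general {p ν : ℕ} (hpν : p ≤ ν) {a : ℝ → ℝ}
    (hode : EqOn (masterOp (ν * (ν + 1)) p a) 0 (Ioo (-1) 1))
    {N : WithTop ℕ∞} (hN : (p + ν : ℕ) + 2 ≤ N)
    {U : Set ℝ} (hU : IsOpen U) (hU_sub : Ioc (-1) 1 ⊆ U) :
    (∃ g : ℝ → ℝ, ContDiffOn ℝ N g U ∧ EqOn a g (Ioo (-1) 1)) ↔
      ∃ C : ℝ, ∀ τ ∈ Ioo (-1 : ℝ) 1,
        a τ = C * (1 - τ ^ 2) ^ p * iteratedDeriv p (legendreP ν) τ := by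
  constructor
  · rintro ⟨g, hg, hag⟩
    have hg_sol : EqOn (masterOp (ν * (ν + 1)) p g) 0 (Ioo (-1) 1) :=
      (eqOn_masterOp_of_eqOn isOpen_Ioo hag).symm.trans hode
    have hp : (p : ℝ) = (p + ν : ℕ) - ν := by simp
    obtain ⟨C, hC⟩ := exists_eqOn_const_mul_of_masterOp_eq_zero
      (k := ν) (n := p + ν) (by omega)
      (fun τ hτ => (hg.contDiffAt (hU.mem_nhds (hU_sub hτ))).of_le hN)
      (fun τ _ => contDiffAt_legendreMode p ν)
      (by rwa [← hp]) (by rw [← hp]; exact fun τ _ => masterOp_legendreMode p ν τ)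
      (not_eqOn_legendreMode_zero hpν)
    exact ⟨C, fun τ hτ => by simp only [hag hτ, hC hτ, legendreMode, mul_assoc]⟩
  · rintro ⟨C, hC⟩
    exact ⟨fun τ => C * legendreMode p ν τ,
      fun τ _ => (contDiffAt_const.mul (contDiffAt_legendreMode p ν)).contDiffWithinAt,
      fun τ hτ => by simp only [hC τ hτ, legendreMode, mul_assoc]⟩

/-- for `ν ≥ p`, a solution of the master ODE extends smoothly past
`τ = ±1` iff it is a multiple of `(1-τ²)^p P_ν^{(p)}(τ)`. -/
theorem stmt_5 (p ν : ℕ) (hνp : p ≤ ν) (a : ℝ → ℝ)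
    (hdiff : ∀ τ ∈ Set.Ioo (-1 : ℝ) 1,
      DifferentiableAt ℝ a τ ∧ DifferentiableAt ℝ (deriv a) τ)
    (hode : ∀ τ ∈ Set.Ioo (-1 : ℝ) 1,
      (1 - τ ^ 2) * deriv (deriv a) τ + 2 * ((p : ℝ) - 1) * τ * deriv a τ
        + ((ν : ℝ) * ((ν : ℝ) + 1) - (p : ℝ) * ((p : ℝ) - 1)) * a τ = 0) :
    (∃ ε > (0 : ℝ), ∃ g : ℝ → ℝ,
        ContDiffOn ℝ (⊤ : ℕ∞) g (Set.Ioo (-1 - ε) (1 + ε)) ∧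
        Set.EqOn a g (Set.Ioo (-1 : ℝ) 1))
    ↔ ∃ C : ℝ, ∀ τ ∈ Set.Ioo (-1 : ℝ) 1,
        a τ = C * (1 - τ ^ 2) ^ p * iteratedDeriv p (legendreP ν) τ := by
  have hiff {ε : ℝ} (hε : 0 < ε) := stmt_5_general hνp hode (N := ∞)
    (mod_cast ENat.natCast_le_of_coe_top_le_withTop le_rfl (p + ν + 2))
    (isOpen_Ioo (a := -1 - ε) (b := 1 + ε)) (Ioc_subset_Ioo (by linarith) (by linarith))
  exact ⟨fun ⟨_, hε, hext⟩ => (hiff hε).1 hext, fun hC => ⟨1, one_pos, (hiff one_pos).2 hC⟩⟩
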